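/- arXiv:2303.14057 — 4 statements merged into one kernel-verified Lean document; each statement's English description precedes it below -/
import Mathlib

section
/- Let A be a subset of the odd positive integers and B a subset of the even positive integers, with 1 ∈ A, and suppose A ∪ B is odd-ended. Define the sequence (c_n) by (1 - Σ_{a∈A} x^a/a! + Σ_{b∈B} x^b/b!)^{-1} = Σ_{n≥0} c_n x^n/n! in the ring of formal power series over ℚ. Then c_n ≥ 0 for every n ≥ 0. -/
open scoped Classical

/-!
Let `V(x) = ∑ vₙ xⁿ` have reciprocal `W(x) = ∑ wₙ xⁿ` with nonnegative coefficients, let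
`E(x) = ∑ vₙ xⁿ/n!` and `H = 1/E = ∑ hₙ xⁿ`. Let `Pₙ(z)` be the coefficient of `xⁿ` in
`V(zx) H(x)`. Multiplying by `W(zx)` gives
`w₀ Pₙ₊₁ = hₙ₊₁ - z ∑_{j + k = n} wⱼ₊₁ zʲ Pₖ`. The linear map `L : zᵐ ↦ zᵐ/m!` turns multiplication
by `z` into integration from `0`, and `L Pₙ` is the coefficient of `xⁿ` in `E(zx)/E(x)`, which
vanishes at `z = 1` for `n > 0`. Hence `w₀ L Pₙ₊₁` is the integral from `z` to `1` of a nonnegative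
combination of iterated integrals from `0` of `L P₀, …, L Pₙ`. Both kinds of integration preserve
the cone spanned by the polynomials `zⁱ (1 - z)ʲ`, so `L Pₙ` lies in this cone and
`v₀ hₙ = (L Pₙ)(0) ≥ 0`.

For the series of an odd-ended set, `(1 + x) V` has constant term `1` and no positive coefficient
otherwise, so the coefficients of `W = (1 + x) · ((1 + x) V)⁻¹` are nonnegative.
-/

open Polynomial (C X derivative monomial)
open Finset.HasAntidiagonal (antidiagonal)
open scoped Polynomial PowerSeries

section Reciprocal

variable {K : Type*} [Field K] [LinearOrder K] [IsStrictOrderedRing K]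

theorem coeff_inv_nonneg_of_coeff_succ_nonpos {F : K⟦X⟧}
    (h0 : 0 < PowerSeries.constantCoeff F) (hF : ∀ n, PowerSeries.coeff (n + 1) F ≤ 0) (n : ℕ) :
    0 ≤ PowerSeries.coeff n F⁻¹ := by
  induction n using Nat.strong_induction_on with
  | _ n ih =>
    rcases n with _ | n
    · simpa using h0.le
    · rw [PowerSeries.coeff_inv, if_neg n.succ_ne_zero, neg_mul, neg_nonneg]
      refine mul_nonpos_of_nonneg_of_nonpos (inv_nonneg.2 h0.le) (Finset.sum_nonpos ?_)
      rintro ⟨_ | i, j⟩ hij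
      · have : j = n + 1 := by simpa using hij
        simp [this]
      · split_ifs with hj
        · exact mul_nonpos_of_nonpos_of_nonneg (hF i) (ih j hj)
        · rfl

theorem coeff_inv_nonneg_of_coeff_succ_add_coeff_nonpos {V : K⟦X⟧}
    (h0 : 0 < PowerSeries.constantCoeff V)
    (hV : ∀ n, PowerSeries.coeff (n + 1) V + PowerSeries.coeff n V ≤ 0) (n : ℕ) :
    0 ≤ PowerSeries.coeff n V⁻¹ := by
  set F : K⟦X⟧ := (1 + PowerSeries.X) * V with hF
  have hF_inv (m : ℕ) : 0 ≤ PowerSeries.coeff m F⁻¹ :=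
    coeff_inv_nonneg_of_coeff_succ_nonpos (by simpa [hF] using h0)
      (fun k ↦ by simpa [hF, add_mul, PowerSeries.coeff_succ_X_mul] using hV k) m
  have hV_inv : V⁻¹ = (1 + PowerSeries.X) * F⁻¹ := by
    rw [hF, PowerSeries.mul_inv_rev, mul_left_comm, PowerSeries.mul_inv_cancel _ (by simp), mul_one]
  rw [hV_inv]
  rcases n with _ | n
  · simpa using hF_inv 0
  · simpa [add_mul, PowerSeries.coeff_succ_X_mul] using add_nonneg (hF_inv (n + 1)) (hF_inv n)

end Reciprocal

section BernsteinCone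

variable {K : Type*} [Field K] [LinearOrder K] [IsStrictOrderedRing K]

variable (K) in
/-- The Bernstein cone: nonnegative combinations of the polynomials `Xⁱ (1 - X)ʲ`. It is a
substitute for the cone of polynomials nonnegative on `[0, 1]` whose stability under integration
has an algebraic proof, valid over any ordered field. -/
noncomputable def bernsteinCone : PointedCone K K[X] :=
  PointedCone.hull K (Set.range fun p : ℕ × ℕ ↦ X ^ p.1 * (1 - X) ^ p.2)

theorem X_pow_mul_one_sub_X_pow_mem_bernsteinCone (i j : ℕ) :
    (X ^ i * (1 - X) ^ j : K[X]) ∈ bernsteinCone K :=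
  PointedCone.subset_hull ⟨(i, j), rfl⟩

theorem one_mem_bernsteinCone : (1 : K[X]) ∈ bernsteinCone K := by
  simpa using X_pow_mul_one_sub_X_pow_mem_bernsteinCone (K := K) 0 0

theorem eval_nonneg_of_mem_bernsteinCone {p : K[X]} (hp : p ∈ bernsteinCone K) {t : K}
    (ht0 : 0 ≤ t) (ht1 : t ≤ 1) : 0 ≤ p.eval t := by
  induction hp using Submodule.span_induction with
  | mem p hp =>
    obtain ⟨⟨i, j⟩, rfl⟩ := hp
    have : 0 ≤ 1 - t := sub_nonneg.2 ht1
    simp only [Polynomial.eval_mul, Polynomial.eval_pow, Polynomial.eval_X, Polynomial.eval_sub,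
      Polynomial.eval_one]
    positivity
  | zero => simp
  | add p q _ _ hp hq => simpa using add_nonneg hp hq
  | smul r p _ hp =>
    rw [Polynomial.eval_smul]
    exact smul_nonneg r.2 hp

theorem comp_one_sub_X_mem_bernsteinCone {p : K[X]} (hp : p ∈ bernsteinCone K) :
    p.comp (1 - X) ∈ bernsteinCone K := by
  induction hp using Submodule.span_induction with
  | mem p hp =>
    obtain ⟨⟨i, j⟩, rfl⟩ := hp
    simpa [mul_comm] using X_pow_mul_one_sub_X_pow_mem_bernsteinCone (K := K) j i
  | zero => simp
  | add p q _ _ hp hq => simpa using add_mem hp hq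
  | smul r p _ hp =>
    simpa [Polynomial.smul_comp] using PointedCone.smul_mem _ r.2 hp

theorem exists_derivative_eq_X_pow_mul_one_sub_X_pow (i j : ℕ) :
    ∃ q ∈ bernsteinCone K, derivative q = X ^ i * (1 - X) ^ j ∧ q.eval 0 = 0 := by
  induction j generalizing i with
  | zero =>
    refine ⟨((i : K) + 1)⁻¹ • X ^ (i + 1), PointedCone.smul_mem _ (by positivity) ?_, ?_, by simp⟩
    · simpa using X_pow_mul_one_sub_X_pow_mem_bernsteinCone (K := K) (i + 1) 0
    · rw [Polynomial.derivative_smul, Polynomial.derivative_X_pow_succ,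
        inv_smul_eq_iff₀ i.cast_add_one_ne_zero]
      simp [Polynomial.smul_eq_C_mul]
  | succ j ih =>
    -- Integration by parts trades a factor `1 - X` for a factor `X`.
    obtain ⟨q, hq, hq', hq0⟩ := ih (i + 1)
    refine ⟨((i : K) + 1)⁻¹ • (X ^ (i + 1) * (1 - X) ^ (j + 1) + ((j : K) + 1) • q),
      PointedCone.smul_mem _ (by positivity) (add_mem
        (X_pow_mul_one_sub_X_pow_mem_bernsteinCone _ _)
        (PointedCone.smul_mem _ (by positivity) hq)), ?_, by simp [hq0]⟩
    have hd : derivative ((1 - X : K[X]) ^ (j + 1)) = -(C ((j : K) + 1) * (1 - X) ^ j) := by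
      simp [Polynomial.derivative_pow_succ]
    rw [Polynomial.derivative_smul, inv_smul_eq_iff₀ i.cast_add_one_ne_zero,
      Polynomial.derivative_add, Polynomial.derivative_mul, Polynomial.derivative_X_pow_succ, hd,
      Polynomial.derivative_smul, hq', Polynomial.smul_eq_C_mul, Polynomial.smul_eq_C_mul]
    ring

theorem exists_derivative_eq_of_mem_bernsteinCone {p : K[X]} (hp : p ∈ bernsteinCone K) :
    ∃ q ∈ bernsteinCone K, derivative q = p ∧ q.eval 0 = 0 := by
  induction hp using Submodule.span_induction with
  | mem p hp =>
    obtain ⟨⟨i, j⟩, rfl⟩ := hp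
    exact exists_derivative_eq_X_pow_mul_one_sub_X_pow i j
  | zero => exact ⟨0, zero_mem _, by simp, by simp⟩
  | add p₁ p₂ _ _ h₁ h₂ =>
    obtain ⟨q₁, hq₁, hd₁, he₁⟩ := h₁
    obtain ⟨q₂, hq₂, hd₂, he₂⟩ := h₂
    exact ⟨q₁ + q₂, add_mem hq₁ hq₂, by simp [hd₁, hd₂], by simp [he₁, he₂]⟩
  | smul r p _ h =>
    obtain ⟨q, hq, hd, he⟩ := h
    exact ⟨(r : K) • q, PointedCone.smul_mem _ r.2 hq, by simp [hd], by simp [he]⟩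

theorem exists_derivative_eq_neg_of_mem_bernsteinCone {p : K[X]} (hp : p ∈ bernsteinCone K) :
    ∃ q ∈ bernsteinCone K, derivative q = -p ∧ q.eval 1 = 0 := by
  obtain ⟨q, hq, hd, he⟩ :=
    exists_derivative_eq_of_mem_bernsteinCone (comp_one_sub_X_mem_bernsteinCone hp)
  refine ⟨q.comp (1 - X), comp_one_sub_X_mem_bernsteinCone hq, ?_, by simp [he]⟩
  rw [Polynomial.derivative_comp_one_sub_X, hd, Polynomial.comp_assoc]
  simp

end BernsteinCone

theorem eq_of_derivative_eq_of_eval_eq {R : Type*} [CommRing R] [IsDomain R] [CharZero R]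
    {p q : R[X]} (hd : derivative p = derivative q) {t : R} (ht : p.eval t = q.eval t) :
    p = q := by
  have hC : p - q = C ((p - q).coeff 0) :=
    Polynomial.eq_C_of_derivative_eq_zero (by rw [map_sub, hd, sub_self])
  have h0 : (p - q).coeff 0 = 0 := by
    simpa [ht] using (congrArg (Polynomial.eval t) hC).symm
  rwa [h0, map_zero, sub_eq_zero] at hC

section BorelTransform

variable {K : Type*} [Field K]

/-- The Borel transform `∑ vₙ xⁿ ↦ ∑ vₙ xⁿ/n!` of formal power series, taking the ordinary
generating function of a sequence to its exponential generating function. -/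
noncomputable def borelTransform (V : K⟦X⟧) : K⟦X⟧ :=
  PowerSeries.mk fun n ↦ PowerSeries.coeff n V / n.factorial

theorem constantCoeff_borelTransform (V : K⟦X⟧) :
    PowerSeries.constantCoeff (borelTransform V) = PowerSeries.constantCoeff V := by
  simp [borelTransform]

variable (K) in
/-- The Borel transform `∑ aₘ zᵐ ↦ ∑ aₘ zᵐ/m!` of polynomials, as a linear map. -/
noncomputable def polyBorelTransform : K[X] →ₗ[K] K[X] :=
  Polynomial.lsum fun m ↦ (m.factorial : K)⁻¹ • monomial m

theorem polyBorelTransform_monomial (m : ℕ) (a : K) :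
    polyBorelTransform K (monomial m a) = monomial m (a / m.factorial) := by
  simp [polyBorelTransform, Polynomial.lsum, Polynomial.smul_monomial, div_eq_inv_mul]

theorem polyBorelTransform_C (a : K) : polyBorelTransform K (C a) = C a := by
  simpa using polyBorelTransform_monomial 0 a

theorem eval_zero_polyBorelTransform_X_mul (p : K[X]) :
    (polyBorelTransform K (X * p)).eval 0 = 0 := by
  induction p using Polynomial.induction_on' with
  | add p q hp hq => simp [mul_add, hp, hq]
  | monomial m a => simp [Polynomial.X_mul_monomial, polyBorelTransform_monomial]

theorem derivative_polyBorelTransform_X_mul [CharZero K] (p : K[X]) :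
    derivative (polyBorelTransform K (X * p)) = polyBorelTransform K p := by
  induction p using Polynomial.induction_on' with
  | add p q hp hq => simp [mul_add, hp, hq]
  | monomial m a =>
    have hm : ((m : K) + 1) ≠ 0 := Nat.cast_add_one_ne_zero m
    have hf : (m.factorial : K) ≠ 0 := Nat.cast_ne_zero.2 m.factorial_ne_zero
    rw [Polynomial.X_mul_monomial, polyBorelTransform_monomial, polyBorelTransform_monomial,
      Polynomial.derivative_monomial, Nat.factorial_succ, Nat.add_sub_cancel]
    congr 1
    push_cast
    field_simp

variable [LinearOrder K] [IsStrictOrderedRing K]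

theorem polyBorelTransform_X_pow_mul_mem_bernsteinCone {p : K[X]}
    (hp : polyBorelTransform K p ∈ bernsteinCone K) (j : ℕ) :
    polyBorelTransform K (X ^ j * p) ∈ bernsteinCone K := by
  induction j with
  | zero => simpa using hp
  | succ j ih =>
    obtain ⟨q, hq, hd, he⟩ := exists_derivative_eq_of_mem_bernsteinCone ih
    have hq_eq : q = polyBorelTransform K (X * (X ^ j * p)) :=
      eq_of_derivative_eq_of_eval_eq (t := 0) (by rw [hd, derivative_polyBorelTransform_X_mul])
        (by rw [he, eval_zero_polyBorelTransform_X_mul])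
    rwa [pow_succ', mul_assoc, ← hq_eq]

theorem polyBorelTransform_mem_bernsteinCone_of_C_mul_eq_C_sub_X_mul {p r : K[X]} {a w : K}
    (hw : 0 < w) (hr : polyBorelTransform K r ∈ bernsteinCone K) (hp : C w * p = C a - X * r)
    (hp1 : (polyBorelTransform K p).eval 1 = 0) :
    polyBorelTransform K p ∈ bernsteinCone K := by
  obtain ⟨q, hq, hd, he⟩ := exists_derivative_eq_neg_of_mem_bernsteinCone hr
  have hpq : w • polyBorelTransform K p = q := by
    refine eq_of_derivative_eq_of_eval_eq (t := 1) ?_ (by simp [hp1, he])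
    rw [← map_smul, Polynomial.smul_eq_C_mul, hp, map_sub, map_sub, polyBorelTransform_C,
      Polynomial.derivative_C, derivative_polyBorelTransform_X_mul, hd, zero_sub]
  rw [← inv_smul_smul₀ hw.ne' (polyBorelTransform K p), hpq]
  exact PointedCone.smul_mem _ (inv_nonneg.2 hw.le) hq

end BorelTransform

section RescaledProduct

variable {K : Type*} [Field K]

/-- The series `V(zx) H(x)` in the variable `x`, with coefficients in the polynomial ring `K[z]`. -/
noncomputable def rescaledProduct (V H : K⟦X⟧) : K[X]⟦X⟧ :=
  PowerSeries.rescale X (PowerSeries.map C V) * PowerSeries.map C H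

theorem coeff_rescaledProduct (V H : K⟦X⟧) (n : ℕ) :
    PowerSeries.coeff n (rescaledProduct V H) = ∑ p ∈ antidiagonal n,
      monomial p.1 (PowerSeries.coeff p.1 V * PowerSeries.coeff p.2 H) := by
  simp only [rescaledProduct, PowerSeries.coeff_mul, PowerSeries.coeff_rescale,
    PowerSeries.coeff_map]
  refine Finset.sum_congr rfl fun p _ ↦ ?_
  rw [mul_assoc, ← C.map_mul, mul_comm, Polynomial.C_mul_X_pow_eq_monomial]

theorem polyBorelTransform_coeff_rescaledProduct (V H : K⟦X⟧) (n : ℕ) :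
    polyBorelTransform K (PowerSeries.coeff n (rescaledProduct V H)) = ∑ p ∈ antidiagonal n,
      monomial p.1 (PowerSeries.coeff p.1 V * PowerSeries.coeff p.2 H / p.1.factorial) := by
  simp only [coeff_rescaledProduct, map_sum, polyBorelTransform_monomial]

theorem eval_zero_polyBorelTransform_coeff_rescaledProduct (V H : K⟦X⟧) (n : ℕ) :
    (polyBorelTransform K (PowerSeries.coeff n (rescaledProduct V H))).eval 0 =
      PowerSeries.constantCoeff V * PowerSeries.coeff n H := by
  rw [polyBorelTransform_coeff_rescaledProduct, Polynomial.eval_finsetSum]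
  cases n <;> simp [Finset.Nat.sum_antidiagonal_succ, Polynomial.eval_monomial]

theorem eval_one_polyBorelTransform_coeff_rescaledProduct (V H : K⟦X⟧) (n : ℕ) :
    (polyBorelTransform K (PowerSeries.coeff n (rescaledProduct V H))).eval 1 =
      PowerSeries.coeff n (borelTransform V * H) := by
  rw [polyBorelTransform_coeff_rescaledProduct, Polynomial.eval_finsetSum, PowerSeries.coeff_mul]
  simp [borelTransform, Polynomial.eval_monomial, div_mul_eq_mul_div]

theorem C_mul_coeff_succ_rescaledProduct {V : K⟦X⟧} (hV : PowerSeries.constantCoeff V ≠ 0)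
    (H : K⟦X⟧) (n : ℕ) :
    C (PowerSeries.constantCoeff V⁻¹) * PowerSeries.coeff (n + 1) (rescaledProduct V H) =
      C (PowerSeries.coeff (n + 1) H) - X * ∑ p ∈ antidiagonal n,
        C (PowerSeries.coeff (p.1 + 1) V⁻¹) *
          (X ^ p.1 * PowerSeries.coeff p.2 (rescaledProduct V H)) := by
  have hmul : PowerSeries.rescale X (PowerSeries.map C V⁻¹) * rescaledProduct V H =
      PowerSeries.map C H := by
    rw [rescaledProduct, ← mul_assoc, ← map_mul, ← map_mul, PowerSeries.inv_mul_cancel V hV,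
      map_one, map_one, one_mul]
  have hcoeff := congrArg (PowerSeries.coeff (n + 1)) hmul
  simp only [PowerSeries.coeff_mul, Finset.Nat.sum_antidiagonal_succ, PowerSeries.coeff_rescale,
    PowerSeries.coeff_map, pow_zero, one_mul, PowerSeries.coeff_zero_eq_constantCoeff_apply]
    at hcoeff
  rw [eq_sub_iff_add_eq, ← hcoeff, Finset.mul_sum]
  congr 1
  exact Finset.sum_congr rfl fun p _ ↦ by ring

variable [LinearOrder K] [IsStrictOrderedRing K]

theorem polyBorelTransform_coeff_rescaledProduct_mem_bernsteinCone {V H : K⟦X⟧}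
    (hV : 0 < PowerSeries.constantCoeff V) (hV_inv : ∀ n, 0 ≤ PowerSeries.coeff n V⁻¹)
    (hH : borelTransform V * H = 1) (n : ℕ) :
    polyBorelTransform K (PowerSeries.coeff n (rescaledProduct V H)) ∈ bernsteinCone K := by
  induction n using Nat.strong_induction_on with
  | _ n ih =>
    rcases n with _ | n
    · have h00 : PowerSeries.constantCoeff V * PowerSeries.constantCoeff H = 1 := by
        simpa [constantCoeff_borelTransform] using congrArg PowerSeries.constantCoeff hH
      rw [polyBorelTransform_coeff_rescaledProduct]
      simpa [h00] using one_mem_bernsteinCone (K := K)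
    · refine polyBorelTransform_mem_bernsteinCone_of_C_mul_eq_C_sub_X_mul
        (by simpa using hV) ?_ (C_mul_coeff_succ_rescaledProduct hV.ne' H n) ?_
      · rw [map_sum]
        refine sum_mem fun p hp ↦ ?_
        have hmem := ih p.2 (Finset.Nat.antidiagonal.snd_lt hp)
        rw [← Polynomial.smul_eq_C_mul, map_smul]
        exact PointedCone.smul_mem _ (hV_inv _)
          (polyBorelTransform_X_pow_mul_mem_bernsteinCone hmem p.1)
      · rw [eval_one_polyBorelTransform_coeff_rescaledProduct, hH, PowerSeries.coeff_one,
          if_neg n.succ_ne_zero]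

theorem coeff_inv_borelTransform_nonneg {V : K⟦X⟧} (hV : 0 < PowerSeries.constantCoeff V)
    (hV_inv : ∀ n, 0 ≤ PowerSeries.coeff n V⁻¹) (n : ℕ) :
    0 ≤ PowerSeries.coeff n (borelTransform V)⁻¹ := by
  have hH : borelTransform V * (borelTransform V)⁻¹ = 1 :=
    PowerSeries.mul_inv_cancel _ (by rw [constantCoeff_borelTransform]; exact hV.ne')
  have h_eval := eval_nonneg_of_mem_bernsteinCone
    (polyBorelTransform_coeff_rescaledProduct_mem_bernsteinCone hV hV_inv hH n) le_rfl zero_le_one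
  rw [eval_zero_polyBorelTransform_coeff_rescaledProduct] at h_eval
  exact nonneg_of_mul_nonneg_right h_eval hV

end RescaledProduct

section SignedSeries

variable (K : Type*) [Field K]

/-- The ordinary generating function `1 - ∑_{a ∈ A} xᵃ + ∑_{b ∈ B} xᵇ`, whose Borel transform is
the series `F_{A,B}`. -/
noncomputable def signedSeries (A B : Set ℕ) : K⟦X⟧ :=
  PowerSeries.mk fun n ↦
    (if n = 0 then 1 else 0) - (if n ∈ A then 1 else 0) + (if n ∈ B then 1 else 0)

variable {A B : Set ℕ}

theorem borelTransform_signedSeries :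
    borelTransform (signedSeries K A B) = PowerSeries.mk fun n ↦
      (if n = 0 then (1 : K) else 0) - (if n ∈ A then (1 : K) / n.factorial else 0) +
        (if n ∈ B then (1 : K) / n.factorial else 0) := by
  ext n
  rcases n with _ | n <;> simp [borelTransform, signedSeries, add_div, sub_div, ite_div]

theorem constantCoeff_signedSeries (hA : 0 ∉ A) (hB : ∀ b ∈ B, b - 1 ∈ A) :
    PowerSeries.constantCoeff (signedSeries K A B) = 1 := by
  -- `0 - 1 = 0` in `ℕ`.
  have h0 : 0 ∉ B := fun h ↦ hA (hB 0 h)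
  simp [signedSeries, hA, h0]

theorem coeff_succ_add_coeff_signedSeries_nonpos [LinearOrder K] [IsStrictOrderedRing K]
    (hAB : Disjoint A B) (hA : 0 ∉ A) (h1 : 1 ∈ A) (hOE : ∀ b ∈ B, b - 1 ∈ A ∧ b + 1 ∈ A) (n : ℕ) :
    PowerSeries.coeff (n + 1) (signedSeries K A B) + PowerSeries.coeff n (signedSeries K A B)
      ≤ 0 := by
  have not_mem_B {m : ℕ} (hm : m ∈ A) : m ∉ B := Set.disjoint_left.1 hAB hm
  have not_mem_A {m : ℕ} (hm : m ∈ B) : m ∉ A := Set.disjoint_right.1 hAB hm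
  rcases n with _ | n
  · have h_zero : PowerSeries.coeff 0 (signedSeries K A B) = 1 := by
      simpa using constantCoeff_signedSeries K hA fun b hb ↦ (hOE b hb).1
    have h_one : PowerSeries.coeff 1 (signedSeries K A B) = -1 := by
      simp [signedSeries, h1, not_mem_B h1]
    rw [zero_add, h_zero, h_one, neg_add_cancel]
  · simp only [signedSeries, PowerSeries.coeff_mk]
    by_cases hs : n + 2 ∈ B
    · have hn : n + 1 ∈ A := (hOE _ hs).1
      simp [hs, hn, not_mem_A hs, not_mem_B hn]
    · by_cases hn : n + 1 ∈ B
      · simp [hs, hn, (hOE _ hn).2, not_mem_A hn]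
      · simp only [hs, hn, Nat.succ_ne_zero, if_false]
        split_ifs <;> norm_num

end SignedSeries

theorem stmt0_general {K : Type*} [Field K] [LinearOrder K] [IsStrictOrderedRing K] {A B : Set ℕ}
    (hAB : Disjoint A B) (hA : 0 ∉ A) (h1 : 1 ∈ A) (hOE : ∀ b ∈ B, b - 1 ∈ A ∧ b + 1 ∈ A)
    (c : ℕ → K)
    (hc : (PowerSeries.mk fun n =>
          (if n = 0 then (1 : K) else 0)
          - (if n ∈ A then (1 : K) / n.factorial else 0)
          + (if n ∈ B then (1 : K) / n.factorial else 0))⁻¹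
        = PowerSeries.mk fun n => c n / n.factorial) (n : ℕ) :
    0 ≤ c n := by
  have hV : PowerSeries.constantCoeff (signedSeries K A B) = 1 :=
    constantCoeff_signedSeries K hA fun b hb ↦ (hOE b hb).1
  have hV_inv (m : ℕ) : 0 ≤ PowerSeries.coeff m (signedSeries K A B)⁻¹ :=
    coeff_inv_nonneg_of_coeff_succ_add_coeff_nonpos (hV ▸ zero_lt_one)
      (coeff_succ_add_coeff_signedSeries_nonpos K hAB hA h1 hOE) m
  have hcn : 0 ≤ c n / n.factorial := by
    have := coeff_inv_borelTransform_nonneg (hV ▸ zero_lt_one) hV_inv n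
    rwa [borelTransform_signedSeries, hc, PowerSeries.coeff_mk] at this
  have hn : (0 : K) < n.factorial := Nat.cast_pos.2 n.factorial_pos
  rwa [le_div_iff₀ hn, zero_mul] at hcn

/-- If `A` is a set of odd positive integers containing `1`, `B` a set of
even positive integers, and `A ∪ B` is odd-ended (for every `b ∈ B`, both `b - 1` and
`b + 1` lie in `A`), then the coefficients `c n` of the reciprocal of
`1 - ∑_{a ∈ A} x^a/a! + ∑_{b ∈ B} x^b/b!`, written as `∑ c_n x^n/n!`, are all nonnegative. -/
theorem stmt0 (A B : Set ℕ)
    (hA : ∀ a ∈ A, Odd a ∧ 0 < a)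
    (hB : ∀ b ∈ B, Even b ∧ 0 < b)
    (h1 : 1 ∈ A)
    (hOE : ∀ b ∈ B, b - 1 ∈ A ∧ b + 1 ∈ A)
    (c : ℕ → ℚ)
    (hc : (PowerSeries.mk fun n =>
          (if n = 0 then (1 : ℚ) else 0)
          - (if n ∈ A then (1 : ℚ) / n.factorial else 0)
          + (if n ∈ B then (1 : ℚ) / n.factorial else 0))⁻¹
        = PowerSeries.mk fun n => c n / n.factorial) :
    ∀ n, 0 ≤ c n :=
  stmt0_general (Set.disjoint_left.2 fun n ha hb ↦ Nat.not_even_iff_odd.2 (hA n ha).1 (hB n hb).1)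
    (fun h0 ↦ (hA 0 h0).2.false) h1 hOE c hc
end

section
/- Let A be a subset of the odd positive integers and B a subset of the even positive integers with 1 ∈ A. Define (c_n) by (1 - Σ_{a∈A} x^a/a! + Σ_{b∈B} x^b/b!)^{-1} = Σ_{n≥0} c_n x^n/n! in ℚ[[x]]. If the smallest positive integer not in A ∪ B is the odd number 2m+1 (for some positive integer m), then c_{2m+2} < 0. -/
open scoped Classical

/-!
Where `A ∪ B` has no gap, `F_{A,B}` has the coefficients of `exp(-x)`, whose reciprocal is `exp x`.
So if `n = 2m + 1` is the first gap, `F_{A,B} = exp(-x) + d xⁿ + d' xⁿ⁺¹ + ⋯`. Perturbing a series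
with reciprocal `Q` in this way changes the reciprocal by `-(d xⁿ + d' xⁿ⁺¹ + ⋯) Q²` up to terms of
order `x²ⁿ`, which lie beyond `xⁿ⁺¹` because `n ≥ 2`. For `Q = exp x` the coefficient of `xⁿ⁺¹`
therefore changes by `-(d' + 2 d)`. At an odd gap `d = 1/n!`, and `d'` is `0` or `-1/(n+1)!`, so
`c_{n+1} = 1 - 2(n+1) + ε` with `ε ∈ {0, 1}`, which is negative.
-/

section Perturbation

open PowerSeries

variable {R : Type*} [CommRing R]

theorem sub_eq_sub_mul_mul_of_mul_eq_one {p q f g : R} (hpq : p * q = 1) (hfg : f * g = 1) :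
    g - q = (p - f) * (q * g) := by
  linear_combination (-g) * hpq + q * hfg

variable {P Q F G : R⟦X⟧} {n : ℕ}

theorem X_pow_dvd_sub_iff : X ^ n ∣ F - G ↔ ∀ k < n, coeff k F = coeff k G := by
  simp only [X_pow_dvd_iff, map_sub, sub_eq_zero]

theorem coeff_eq_of_mul_eq_one (hPQ : P * Q = 1) (hFG : F * G = 1)
    (hPF : ∀ k < n, coeff k P = coeff k F) : ∀ k < n, coeff k G = coeff k Q := by
  rw [← X_pow_dvd_sub_iff] at hPF ⊢
  rw [sub_eq_sub_mul_mul_of_mul_eq_one hPQ hFG]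
  exact hPF.mul_right _

theorem coeff_succ_of_mul_eq_one (hn : 2 ≤ n) (hPQ : P * Q = 1) (hFG : F * G = 1)
    (hPF : ∀ k < n, coeff k P = coeff k F) :
    coeff (n + 1) G = coeff (n + 1) Q
      - coeff 0 Q ^ 2 * (coeff (n + 1) F - coeff (n + 1) P)
      - 2 * (coeff 0 Q * coeff 1 Q) * (coeff n F - coeff n P) := by
  have hG0 : coeff 0 G = coeff 0 Q := coeff_eq_of_mul_eq_one hPQ hFG hPF 0 (by omega)
  have hG1 : coeff 1 G = coeff 1 Q := coeff_eq_of_mul_eq_one hPQ hFG hPF 1 (by omega)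
  obtain ⟨D, hD⟩ : X ^ n ∣ P - F := X_pow_dvd_sub_iff.2 hPF
  have hD0 : coeff 0 D = coeff n P - coeff n F := by
    rw [← map_sub, hD, ← coeff_X_pow_mul D n 0, zero_add]
  have hD1 : coeff 1 D = coeff (n + 1) P - coeff (n + 1) F := by
    rw [← map_sub, hD, ← coeff_X_pow_mul D n 1, add_comm]
  have hGQ : coeff (n + 1) G - coeff (n + 1) Q = coeff 1 (D * (Q * G)) := by
    rw [← map_sub, sub_eq_sub_mul_mul_of_mul_eq_one hPQ hFG, hD, mul_assoc, add_comm,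
      coeff_X_pow_mul]
  simp only [coeff_one_mul, map_mul, ← coeff_zero_eq_constantCoeff_apply, hG0, hG1, hD0, hD1]
    at hGQ
  linear_combination hGQ

end Perturbation

section Egf

open PowerSeries
open scoped Nat

variable {K : Type*} [Field K]

/-- The exponential generating function `∑ f n xⁿ / n!` of a sequence `f`. -/
noncomputable def egf (f : ℕ → K) : K⟦X⟧ :=
  mk fun n => f n / n !

theorem coeff_egf (f : ℕ → K) (n : ℕ) : coeff n (egf f) = f n / n ! :=
  coeff_mk _ _

theorem egf_neg_one_pow_mul_egf_one [CharZero K] :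
    egf (fun n => (-1 : K) ^ n) * egf (fun _ => (1 : K)) = 1 := by
  have hexp : egf (fun _ => (1 : K)) = exp K := by
    ext n
    simp [coeff_egf, coeff_exp]
  have hexp_neg : egf (fun n => (-1 : K) ^ n) = evalNegHom (exp K) := by
    ext n
    simp [coeff_egf, evalNegHom, coeff_rescale, coeff_exp, div_eq_mul_inv]
  rw [hexp, hexp_neg, mul_comm, exp_mul_exp_neg_eq_one]

theorem egf_mul_egf_eq_one_of_inv_eq {f c : ℕ → K} (hf : f 0 ≠ 0)
    (hfc : (egf f)⁻¹ = egf c) : egf f * egf c = 1 := by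
  rw [← hfc]
  refine PowerSeries.mul_inv_cancel _ ?_
  simpa [← coeff_zero_eq_constantCoeff_apply, coeff_egf] using hf

theorem apply_succ_of_egf_mul_egf_eq_one [CharZero K] {f c : ℕ → K} {n : ℕ} (hn : 2 ≤ n)
    (hf : ∀ k < n, f k = (-1) ^ k) (hfc : egf f * egf c = 1) :
    c (n + 1) = 1 - (f (n + 1) - (-1) ^ (n + 1)) - 2 * (n + 1) * (f n - (-1) ^ n) := by
  have hcoeff := coeff_succ_of_mul_eq_one hn egf_neg_one_pow_mul_egf_one hfc
    fun k hk => by rw [coeff_egf, coeff_egf, hf k hk]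
  simp only [coeff_egf, Nat.factorial_succ, Nat.factorial_zero] at hcoeff
  have hfact : (n ! : K) ≠ 0 := Nat.cast_ne_zero.2 n.factorial_ne_zero
  have hsucc : (n + 1 : K) ≠ 0 := n.cast_add_one_ne_zero
  push_cast at hcoeff
  field_simp at hcoeff
  linear_combination hcoeff

end Egf

section SignSeq

variable {K : Type*} {A B : Set ℕ} {n : ℕ}

/-- The sequence whose exponential generating function is `F_{A,B}`. -/
noncomputable def signSeq (K : Type*) [Ring K] (A B : Set ℕ) (n : ℕ) : K :=
  (if n = 0 then 1 else 0) - (if n ∈ A then 1 else 0) + (if n ∈ B then 1 else 0)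

theorem signSeq_zero [Ring K] (hA : 0 ∉ A) (hB : 0 ∉ B) : signSeq K A B 0 = 1 := by
  simp [signSeq, hA, hB]

theorem signSeq_of_notMem_union [Ring K] (hn : n ≠ 0) (h : n ∉ A ∪ B) : signSeq K A B n = 0 := by
  rw [Set.mem_union, not_or] at h
  simp [signSeq, hn, h]

theorem signSeq_of_mem_union [Ring K] (hA : ∀ a ∈ A, Odd a) (hB : ∀ b ∈ B, Even b)
    (hn : n ≠ 0) (h : n ∈ A ∪ B) : signSeq K A B n = (-1) ^ n := by
  rcases h with h | h
  · have hnB : n ∉ B := fun hb => Nat.not_even_iff_odd.2 (hA n h) (hB n hb)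
    simp [signSeq, hn, h, hnB, (hA n h).neg_one_pow]
  · have hnA : n ∉ A := fun ha => Nat.not_even_iff_odd.2 (hA n ha) (hB n h)
    simp [signSeq, hn, h, hnA, (hB n h).neg_one_pow]

theorem signSeq_nonneg_of_notMem [Ring K] [PartialOrder K] [IsOrderedRing K] (h : n ∉ A) :
    0 ≤ signSeq K A B n := by
  rw [signSeq, if_neg h, sub_zero]
  split_ifs <;> norm_num

theorem egf_signSeq [Field K] (A B : Set ℕ) :
    egf (signSeq K A B) = PowerSeries.mk fun n =>
      (if n = 0 then (1 : K) else 0)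
      - (if n ∈ A then (1 : K) / n.factorial else 0)
      + (if n ∈ B then (1 : K) / n.factorial else 0) := by
  ext n
  rw [coeff_egf, PowerSeries.coeff_mk, signSeq, add_div, sub_div]
  rcases eq_or_ne n 0 with rfl | hn <;> simp [*, ite_div]

end SignSeq

theorem stmt2_general {K : Type*} [Field K] [LinearOrder K] [IsStrictOrderedRing K]
    (A B : Set ℕ) (hA : ∀ a ∈ A, Odd a) (hB : ∀ b ∈ B, Even b ∧ 0 < b)
    (m : ℕ) (hm : 1 ≤ m) (hmiss : 2 * m + 1 ∉ A ∪ B)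
    (hbelow : ∀ j, 1 ≤ j → j ≤ 2 * m → j ∈ A ∪ B)
    (c : ℕ → K)
    (hc : (PowerSeries.mk fun n =>
          (if n = 0 then (1 : K) else 0)
          - (if n ∈ A then (1 : K) / n.factorial else 0)
          + (if n ∈ B then (1 : K) / n.factorial else 0))⁻¹
        = PowerSeries.mk fun n => c n / n.factorial) :
    c (2 * m + 2) < 0 := by
  set f := signSeq K A B with hf
  have hf_zero : f 0 = 1 :=
    signSeq_zero (fun h => Nat.not_odd_zero (hA 0 h)) (fun h => (hB 0 h).2.false)
  have hf_below : ∀ k < 2 * m + 1, f k = (-1) ^ k := fun k hk => by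
    rcases k.eq_zero_or_pos with rfl | hk0
    · rw [hf_zero, pow_zero]
    · exact signSeq_of_mem_union hA (fun b hb => (hB b hb).1) hk0.ne' (hbelow k hk0 (by omega))
  have hf_gap : f (2 * m + 1) = 0 := signSeq_of_notMem_union (by omega) hmiss
  have hf_next : 0 ≤ f (2 * m + 2) :=
    signSeq_nonneg_of_notMem fun h => Nat.not_odd_iff_even.2 (by simp [parity_simps]) (hA _ h)
  have hfc : egf f * egf c = 1 :=
    egf_mul_egf_eq_one_of_inv_eq (hf_zero ▸ one_ne_zero) (by rw [hf, egf_signSeq, hc, egf])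
  have hvalue : c (2 * m + 2) = -(4 * m + 2) - f (2 * m + 2) := by
    rw [apply_succ_of_egf_mul_egf_eq_one (by omega) hf_below hfc, hf_gap,
      (odd_two_mul_add_one m).neg_one_pow, (odd_two_mul_add_one m).add_one.neg_one_pow]
    push_cast
    ring
  rw [hvalue]
  linarith [m.cast_nonneg (α := K)]

/-- If `A` is a set of odd positive integers containing `1` and `B` a set of
even positive integers, and the smallest positive integer not in `A ∪ B` is the odd number
`2m + 1` (for some `m ≥ 1`), then the coefficient `c (2m+2)` of the reciprocal of
`1 - ∑_{a ∈ A} x^a/a! + ∑_{b ∈ B} x^b/b!`, written as `∑ c_n x^n/n!`, is negative. -/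
theorem stmt2 (A B : Set ℕ)
    (hA : ∀ a ∈ A, Odd a ∧ 0 < a)
    (hB : ∀ b ∈ B, Even b ∧ 0 < b)
    (h1 : 1 ∈ A)
    (m : ℕ) (hm : 1 ≤ m)
    (hmiss : 2 * m + 1 ∉ A ∪ B)
    (hbelow : ∀ j, 1 ≤ j → j ≤ 2 * m → j ∈ A ∪ B)
    (c : ℕ → ℚ)
    (hc : (PowerSeries.mk fun n =>
          (if n = 0 then (1 : ℚ) else 0)
          - (if n ∈ A then (1 : ℚ) / n.factorial else 0)
          + (if n ∈ B then (1 : ℚ) / n.factorial else 0))⁻¹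
        = PowerSeries.mk fun n => c n / n.factorial) :
    c (2 * m + 2) < 0 := by
  exact stmt2_general A B (fun a ha => (hA a ha).1) hB m hm hmiss hbelow c hc
end

section
/- Let m be a positive integer, and let A = {1, 3, ..., 2m-1} and B = {2, 4, ..., 2m}, so that A ∪ B = {1, 2, ..., 2m}. Define (c_n) by (1 - Σ_{a∈A} x^a/a! + Σ_{b∈B} x^b/b!)^{-1} = Σ_{n≥0} c_n x^n/n! in ℚ[[x]]. Then c_{2m+2} = -2(2m+1). -/
open scoped Classical

/-!
The series with `A ∪ B = {1, …, N}` is the truncation of `f = exp (-x)` below degree `n = N + 1`.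
Writing it as `f - x ^ n * s` and expanding around `g = f⁻¹ = exp x`, its inverse is
`g + x ^ n * s * g ^ 2` modulo `x ^ (2 * n)`. Since `n + 1 < 2 * n`, the coefficient of
`x ^ (n + 1)` in the correction only involves the two lowest coefficients of `s` and `g`.
-/

section TruncatedInverse

open PowerSeries

theorem coeff_add_eq_of_trunc_mul_eq_one {R : Type*} [CommRing R] {f g h : R⟦X⟧} {n j : ℕ}
    (hfg : f * g = 1) (hh : (trunc n f : R⟦X⟧) * h = 1) (hj : j < n) :
    coeff (n + j) h = coeff (n + j) g + coeff j ((mk fun i ↦ coeff (i + n) f) * g ^ 2) := by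
  set s : R⟦X⟧ := mk fun i ↦ coeff (i + n) f
  have hf : f = X ^ n * s + (trunc n f : R⟦X⟧) := eq_X_pow_mul_shift_add_trunc n f
  have fixed_point : h = g + X ^ n * (s * g * h) := by
    linear_combination g * hh - h * hfg + g * h * hf
  have expansion : h = g + X ^ n * (s * g ^ 2 + X ^ n * (s ^ 2 * g ^ 2 * h)) := by
    linear_combination (1 + X ^ n * s * g) * fixed_point
  conv_lhs => rw [expansion]
  rw [map_add, add_comm n j, coeff_X_pow_mul, map_add, coeff_X_pow_mul', if_neg hj.not_ge,
    add_zero]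

theorem coeff_succ_eq_of_trunc_mul_eq_one {R : Type*} [CommRing R] {f g h : R⟦X⟧} {n : ℕ}
    (hfg : f * g = 1) (hh : (trunc n f : R⟦X⟧) * h = 1) (hn : 1 < n) :
    coeff (n + 1) h = coeff (n + 1) g + coeff (n + 1) f * constantCoeff g ^ 2
      + 2 * coeff n f * constantCoeff g * coeff 1 g := by
  rw [coeff_add_eq_of_trunc_mul_eq_one hfg hh hn, coeff_one_mul, coeff_one_pow]
  simp only [map_pow, ← coeff_zero_eq_constantCoeff_apply, coeff_mk, zero_add, add_comm 1 n]
  push_cast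
  ring

section RatAlgebra

variable (R : Type*) [CommRing R] [Algebra ℚ R]

theorem coeff_evalNegHom_exp (n : ℕ) :
    coeff n (evalNegHom (exp R)) = (-1) ^ n * algebraMap ℚ R (1 / n.factorial) := by
  rw [evalNegHom, coeff_rescale, coeff_exp]

theorem factorial_mul_coeff_succ_of_trunc_evalNegHom_exp_mul_eq_one {h : R⟦X⟧} {n : ℕ}
    (hh : (trunc n (evalNegHom (exp R)) : R⟦X⟧) * h = 1) (hn : 1 < n) :
    ((n + 1).factorial : R) * coeff (n + 1) h = 1 + (-1) ^ n * (2 * n + 1) := by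
  have inverse : evalNegHom (exp R) * exp R = 1 := by
    rw [mul_comm, exp_mul_exp_neg_eq_one]
  have factorial_cancel (k : ℕ) : (k.factorial : R) * algebraMap ℚ R (1 / k.factorial) = 1 := by
    rw [← map_natCast (algebraMap ℚ R), ← map_mul,
      mul_one_div_cancel (Nat.cast_ne_zero.2 k.factorial_ne_zero), map_one]
  have factorial_succ : ((n + 1).factorial : R) = (n + 1) * n.factorial := by
    rw [Nat.factorial_succ]
    push_cast
    rfl
  rw [coeff_succ_eq_of_trunc_mul_eq_one inverse hh hn]
  simp only [coeff_evalNegHom_exp, coeff_exp, constantCoeff_exp, Nat.factorial_one, Nat.cast_one,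
    div_one, map_one]
  linear_combination (1 + (-1) ^ (n + 1)) * factorial_cancel (n + 1)
    + 2 * (-1) ^ n * (n + 1) * factorial_cancel n
    + 2 * (-1) ^ n * algebraMap ℚ R (1 / n.factorial) * factorial_succ

end RatAlgebra

theorem mk_odd_even_eq_trunc_evalNegHom_exp (K : Type*) [Field K] [CharZero K] {N : ℕ} {A B : Set ℕ}
    (hA : A = {j | Odd j ∧ j ≤ N}) (hB : B = {j | Even j ∧ 0 < j ∧ j ≤ N}) :
    (mk fun n ↦ (if n = 0 then (1 : K) else 0)
        - (if n ∈ A then (1 : K) / n.factorial else 0)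
        + (if n ∈ B then (1 : K) / n.factorial else 0))
      = trunc (N + 1) (evalNegHom (exp K)) := by
  ext n
  simp only [hA, hB, coeff_mk, Polynomial.coeff_coe, coeff_trunc, coeff_evalNegHom_exp,
    map_div₀, map_one, map_natCast, Nat.lt_succ_iff, Set.mem_ofPred_eq]
  rcases n.eq_zero_or_pos with rfl | hpos
  · simp
  · rcases n.even_or_odd with heven | hodd
    · simp [hpos, hpos.ne', heven, Nat.not_odd_iff_even.2 heven, heven.neg_one_pow]
    · simp [hpos.ne', hodd, Nat.not_even_iff_odd.2 hodd, hodd.neg_one_pow, neg_ite]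

theorem stmt3_general {K : Type*} [Field K] [CharZero K] (N : ℕ) (hN : 1 ≤ N)
    (A B : Set ℕ)
    (hA : A = {j | Odd j ∧ j ≤ N})
    (hB : B = {j | Even j ∧ 0 < j ∧ j ≤ N})
    (c : ℕ → K)
    (hc : (mk fun n =>
          (if n = 0 then (1 : K) else 0)
          - (if n ∈ A then (1 : K) / n.factorial else 0)
          + (if n ∈ B then (1 : K) / n.factorial else 0))⁻¹
        = mk fun n => c n / n.factorial) :
    c (N + 2) = 1 - (-1) ^ N * (2 * (N : K) + 3) := by
  rw [mk_odd_even_eq_trunc_evalNegHom_exp K hA hB] at hc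
  have constantCoeff_ne_zero :
      constantCoeff (trunc (N + 1) (evalNegHom (exp K)) : K⟦X⟧) ≠ 0 := by
    simp [← coeff_zero_eq_constantCoeff_apply, coeff_trunc, coeff_evalNegHom_exp]
  have coeff_inv := factorial_mul_coeff_succ_of_trunc_evalNegHom_exp_mul_eq_one K
    (PowerSeries.mul_inv_cancel _ constantCoeff_ne_zero) (Nat.lt_succ_of_le hN)
  rw [hc, coeff_mk,
    mul_div_cancel₀ _ (Nat.cast_ne_zero.2 (Nat.factorial_ne_zero _))] at coeff_inv
  rw [coeff_inv]
  push_cast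
  ring

end TruncatedInverse

/-- For `m ≥ 1`, with `A = {1, 3, ..., 2m-1}` and `B = {2, 4, ..., 2m}`
(so `A ∪ B = {1, ..., 2m}`), the coefficient `c (2m+2)` of the reciprocal of
`1 - ∑_{a ∈ A} x^a/a! + ∑_{b ∈ B} x^b/b!`, written as `∑ c_n x^n/n!`, equals `-2(2m+1)`. -/
theorem stmt3 (m : ℕ) (hm : 1 ≤ m)
    (A B : Set ℕ)
    (hA : A = {j | Odd j ∧ j ≤ 2 * m})
    (hB : B = {j | Even j ∧ 0 < j ∧ j ≤ 2 * m})
    (c : ℕ → ℚ)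
    (hc : (PowerSeries.mk fun n =>
          (if n = 0 then (1 : ℚ) else 0)
          - (if n ∈ A then (1 : ℚ) / n.factorial else 0)
          + (if n ∈ B then (1 : ℚ) / n.factorial else 0))⁻¹
        = PowerSeries.mk fun n => c n / n.factorial) :
    c (2 * m + 2) = -2 * (2 * (m : ℚ) + 1) := by
  rw [stmt3_general (2 * m) (by omega) A B hA hB c hc, (even_two_mul m).neg_one_pow]
  push_cast
  ring
end

section
/- Let F be a field of characteristic 0 and let (a_n)_{n≥0} be a sequence in F with a_0 = 1. Define (w_n)_{n≥0} by (Σ_{n≥0} a_n x^n)^{-1} = Σ_{n≥0} w_n x^n in F[[x]]. Then (Σ_{n≥0} a_n x^n/n!)^{-1} = Σ_{n≥0} b_n x^n/n!, where b_n = Σ_{L ⊨ n} w_L · β(L); here the sum is over all compositions L = (L_1, ..., L_k) of n, w_L = w_{L_1} ⋯ w_{L_k}, and β(L) is the number of permutations of {1, ..., n} whose run composition equals L. -/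
/-- The composition of maximal increasing run lengths (read left to right) of the word
`σ(1) σ(2) ⋯ σ(n)` associated to a permutation `σ` of `{1, ..., n}`. -/
def runComposition {n : ℕ} (σ : Equiv.Perm (Fin n)) : List ℕ :=
  ((List.ofFn fun i => σ i).splitBy fun a b => decide (a < b)).map List.length

/-- The number of permutations of `{1, ..., n}` whose run composition is `L`. -/
noncomputable def runCount {n : ℕ} (L : Composition n) : ℕ :=
  Nat.card {σ : Equiv.Perm (Fin n) // runComposition σ = L.blocks}

/-!
Cut the word of a permutation of `{1, ..., n}` into an increasing prefix of length `k` and a rest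
`v`, and give this cut the weight `a k * w_L`, where `L` lists the run lengths of `v`. A fixed
word whose first run has length `m` can only be cut inside that run, so its cuts contribute
`∑ k ≤ m, a k * w (m - k) = 0` times the weight of its other runs. For fixed `k`, a cut is a choice
of the `k` letters of the prefix together with an arrangement of the other letters. Summing all
weights in both ways gives `∑ k ≤ n, n.choose k • (a k * b (n - k)) = 0` for `n ≠ 0`.
-/

namespace RunTheorem

open Finset

section FirstRun

variable {α : Type*}

theorem exists_append_isChain_not_rel (r : α → α → Prop) {l : List α} (hl : l ≠ []) :
    ∃ u v : List α, u ≠ [] ∧ l = u ++ v ∧ u.IsChain r ∧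
      ∀ x ∈ u.getLast?, ∀ y ∈ v.head?, ¬ r x y := by
  induction l with
  | nil => contradiction
  | cons x l ih =>
    rcases l with _ | ⟨y, l⟩
    · exact ⟨[x], [], by simp⟩
    · by_cases hxy : r x y
      · obtain ⟨u, v, hu, huv, hchain, hbreak⟩ := ih (by simp)
        obtain ⟨_, u, rfl⟩ := List.exists_cons_of_ne_nil hu
        obtain ⟨rfl, rfl⟩ := List.cons_eq_cons.1 huv
        exact ⟨x :: y :: u, v, by simp, rfl, hchain.cons_cons hxy, by simpa using hbreak⟩
      · exact ⟨[x], y :: l, by simpa using hxy⟩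

theorem isChain_take_append_iff {r : α → α → Prop} {u v : List α} (hu : u ≠ [])
    (hchain : u.IsChain r) (hbreak : ∀ x ∈ u.getLast?, ∀ y ∈ v.head?, ¬ r x y) {k : ℕ}
    (hk : k ≤ (u ++ v).length) :
    ((u ++ v).take k).IsChain r ↔ k ≤ u.length := by
  refine ⟨fun h => ?_, fun h => by simpa [List.take_append_of_le_length h] using hchain.take k⟩
  by_contra! hlt
  rw [List.take_append, List.take_of_length_le hlt.le, List.isChain_append] at h
  obtain ⟨y, v, rfl⟩ : ∃ y t, v = y :: t := List.exists_cons_of_ne_nil (by grind)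
  have hlast := List.getLast_mem_getLast? hu
  refine hbreak _ hlast y (by simp) (h.2.2 _ hlast y ?_)
  rw [List.head?_take, if_neg (by omega), List.head?_cons, Option.mem_some_iff]

theorem splitBy_map {β : Type*} (r : β → β → Bool) (f : α → β) (l : List α) :
    (l.map f).splitBy r = (l.splitBy fun x y => r (f x) (f y)).map (List.map f) := by
  conv_lhs => rw [← List.flatten_splitBy (fun x y => r (f x) (f y)) l, List.map_flatten]
  refine List.splitBy_flatten ?_ ?_ ?_
  · simp
  · intro _ hm
    obtain ⟨u, hu, rfl⟩ := List.mem_map.1 hm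
    exact (List.isChain_map f).2 (List.isChain_of_mem_splitBy hu)
  · refine (List.isChain_map _).2 ((List.isChain_getLast_head_splitBy _ l).imp ?_)
    rintro _ _ ⟨hu, hv, h⟩
    exact ⟨by simpa using hu, by simpa using hv, by simpa [List.getLast_map, List.head_map] using h⟩

end FirstRun

section RunWeight

variable {α R : Type*}

/-- The product of `w m` over the lengths `m` of the maximal increasing runs of a word, taken from
left to right: for the word of a permutation with run composition `L`, this is `w_L`. -/
def runWeight [LT α] [DecidableLT α] [Monoid R] (w : ℕ → R) (l : List α) : R :=
  (((l.splitBy fun x y => decide (x < y)).map List.length).map w).prod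

theorem runWeight_nil [LT α] [DecidableLT α] [Monoid R] (w : ℕ → R) :
    runWeight w ([] : List α) = 1 :=
  rfl

theorem runWeight_map [LinearOrder α] {β : Type*} [Preorder β] [DecidableLT β] [Monoid R]
    (w : ℕ → R) {f : α → β} (hf : StrictMono f) (l : List α) :
    runWeight w (l.map f) = runWeight w l := by
  simp [runWeight, splitBy_map, hf.lt_iff_lt, Function.comp_def]

theorem runWeight_append [LT α] [DecidableLT α] [Monoid R] {w : ℕ → R} (hw : w 0 = 1)
    {u v : List α} (hchain : u.IsChain (· < ·))
    (hbreak : ∀ x ∈ u.getLast?, ∀ y ∈ v.head?, ¬ x < y) :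
    runWeight w (u ++ v) = w u.length * runWeight w v := by
  rcases eq_or_ne u [] with rfl | hu
  · simp [hw]
  · rw [runWeight, List.splitBy_append (by simpa using hbreak),
      List.splitBy_of_isChain hu (by simpa using hchain)]
    simp [runWeight]

theorem sum_ite_isChain_take_mul_runWeight_drop [LT α] [DecidableLT α] [Semiring R] {a w : ℕ → R}
    (hw : w 0 = 1) (haw : ∀ m ≠ 0, ∑ k ∈ range (m + 1), a k * w (m - k) = 0)
    {l : List α} {n : ℕ} (hl : l.length = n) (hn : n ≠ 0) :
    ∑ k ∈ range (n + 1),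
      (if (l.take k).IsChain (· < ·) then a k * runWeight w (l.drop k) else 0) = 0 := by
  subst hl
  obtain ⟨u, v, hu, rfl, hchain, hbreak⟩ :=
    exists_append_isChain_not_rel (· < ·) (mt List.length_eq_zero_iff.2 hn)
  have cuts : {k ∈ range ((u ++ v).length + 1) | ((u ++ v).take k).IsChain (· < ·)} =
      range (u.length + 1) := by
    ext k
    have := isChain_take_append_iff hu hchain hbreak (k := k)
    grind
  have weight_drop : ∀ k ∈ range (u.length + 1),
      a k * runWeight w ((u ++ v).drop k) = a k * w (u.length - k) * runWeight w v := by
    intro k hk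
    have hk : k ≤ u.length := mem_range_succ_iff.1 hk
    rw [List.drop_append_of_le_length hk, runWeight_append hw (hchain.drop k), List.length_drop,
      mul_assoc]
    grind
  rw [← sum_filter, cuts, sum_congr rfl weight_drop, ← sum_mul, haw _ (by simpa using hu), zero_mul]

end RunWeight

section Arrangements

variable {α : Type*} {S T : Finset α} {l : List α}

/-- The words in which each element of `S` occurs exactly once and no other letter occurs. -/
def arrangements (S : Finset α) : Finset (List α) :=
  ⟨S.val.lists, Multiset.lists_nodup_finset S⟩

theorem mem_arrangements : l ∈ arrangements S ↔ (l : Multiset α) = S.val := by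
  rw [arrangements, mem_mk, Multiset.mem_lists_iff, eq_comm, Multiset.quot_mk_to_coe]

theorem length_of_mem_arrangements (hl : l ∈ arrangements S) : l.length = #S :=
  congrArg Multiset.card (mem_arrangements.1 hl)

theorem card_arrangements (S : Finset α) : #(arrangements S) = (#S).factorial := by
  rw [arrangements, card_mk, ← coe_toList, Multiset.lists_coe, Multiset.coe_card,
    List.length_permutations, length_toList]

theorem nodup_of_mem_arrangements (hl : l ∈ arrangements S) : l.Nodup := by
  rw [← Multiset.coe_nodup, mem_arrangements.1 hl]
  exact S.nodup

theorem append_mem_arrangements [DecidableEq α] {u v : List α} (hTS : T ⊆ S)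
    (hu : u ∈ arrangements T) (hv : v ∈ arrangements (S \ T)) : u ++ v ∈ arrangements S := by
  rw [mem_arrangements] at *
  rw [← Multiset.coe_add, hu, hv, sdiff_val, add_tsub_cancel_of_le (val_le_iff.2 hTS)]

theorem sum_arrangements_take_drop [DecidableEq α] {M : Type*} [AddCommMonoid M]
    (S : Finset α) {k : ℕ} (hk : k ≤ #S) (g : List α → List α → M) :
    ∑ l ∈ arrangements S, g (l.take k) (l.drop k) =
      ∑ T ∈ S.powersetCard k, ∑ u ∈ arrangements T, ∑ v ∈ arrangements (S \ T), g u v := by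
  simp_rw [← sum_product']
  rw [sum_sigma']
  refine sum_bij' (fun l _ => ⟨(l.take k).toFinset, l.take k, l.drop k⟩)
    (fun p _ => p.2.1 ++ p.2.2) ?_ ?_ ?_ ?_ ?_
  · intro l hl
    have hsplit : (l.take k : Multiset α) + l.drop k = S.val := by
      rw [Multiset.coe_add, List.take_append_drop, mem_arrangements.1 hl]
    have htake : (l.take k).toFinset.val = l.take k := by
      rw [List.toFinset_val, ((nodup_of_mem_arrangements hl).sublist (List.take_sublist k l)).dedup]
    simp only [mem_sigma, mem_powersetCard, mem_product, mem_arrangements, sdiff_val, ← val_le_iff,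
      card_def, htake, ← hsplit, add_tsub_cancel_left, le_add_iff_nonneg_right, zero_le, true_and,
      Multiset.coe_card, and_true]
    exact List.length_take_of_le (hk.trans_eq (length_of_mem_arrangements hl).symm)
  · rintro ⟨T, u, v⟩ h
    simp only [mem_sigma, mem_powersetCard, mem_product] at h
    exact append_mem_arrangements h.1.1 h.2.1 h.2.2
  · simp
  · rintro ⟨T, u, v⟩ h
    simp only [mem_sigma, mem_powersetCard, mem_product] at h
    obtain ⟨⟨-, hT⟩, hu, -⟩ := h
    have hlen : u.length = k := (length_of_mem_arrangements hu).trans hT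
    have htoFinset : u.toFinset = T := by
      rw [← val_inj, List.toFinset_val, (nodup_of_mem_arrangements hu).dedup, mem_arrangements.1 hu]
    simp [List.take_left' hlen, List.drop_left' hlen, htoFinset]
  · simp

theorem filter_isChain_lt_arrangements [LinearOrder α] (T : Finset α) :
    {u ∈ arrangements T | u.IsChain (· < ·)} = {T.sort} := by
  ext u
  rw [mem_filter, mem_singleton, mem_arrangements]
  constructor
  · rintro ⟨hu, hchain⟩
    refine hchain.sortedLT.eq_of_mem_iff T.sortedLT_sort fun x => ?_
    rw [← Multiset.mem_coe, hu, mem_val, mem_sort]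
  · rintro rfl
    exact ⟨T.sort_eq _, T.sortedLT_sort.isChain⟩

theorem sum_arrangements_ite_isChain_take [LinearOrder α] {M : Type*} [AddCommMonoid M]
    (S : Finset α) {k : ℕ} (hk : k ≤ #S) (g : List α → M) :
    ∑ l ∈ arrangements S, (if (l.take k).IsChain (· < ·) then g (l.drop k) else 0) =
      ∑ T ∈ S.powersetCard k, ∑ v ∈ arrangements (S \ T), g v := by
  rw [sum_arrangements_take_drop S hk fun u v => if u.IsChain (· < ·) then g v else 0]
  refine sum_congr rfl fun T _ => ?_
  rw [sum_comm]
  simp_rw [← sum_filter, filter_isChain_lt_arrangements, sum_singleton]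

theorem arrangements_map_univ {n : ℕ} (e : Fin n ↪ α) :
    arrangements (univ.map e) = univ.map
      ⟨fun σ : Equiv.Perm (Fin n) => List.ofFn (e ∘ σ), fun _ _ h =>
        DFunLike.coe_injective (e.injective.comp_left (List.ofFn_injective h))⟩ := by
  refine (eq_of_subset_of_card_le (fun l hl => ?_) ?_).symm
  · obtain ⟨σ, -, rfl⟩ := mem_map.1 hl
    rw [mem_arrangements, map_val, Fin.univ_val_map, Multiset.coe_eq_coe]
    exact σ.ofFn_comp_perm e
  · simp [card_arrangements, Fintype.card_perm]

end Arrangements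

section Permutations

variable {R : Type*} [Semiring R]

/-- The total run weight of the permutations of `{1, ..., n}`, the `b_n` of the theorem before
grouping the permutations by their run composition. -/
def permRunSum (w : ℕ → R) (n : ℕ) : R :=
  ∑ σ : Equiv.Perm (Fin n), runWeight w (List.ofFn σ)

theorem sum_arrangements_runWeight {α : Type*} [LinearOrder α] (w : ℕ → R) (S : Finset α) :
    ∑ l ∈ arrangements S, runWeight w l = permRunSum w #S := by
  let e := S.orderEmbOfFin rfl
  rw [← S.map_orderEmbOfFin_univ rfl, arrangements_map_univ, sum_map, card_map, card_fin]
  refine sum_congr rfl fun σ _ => ?_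
  exact (congrArg _ List.map_ofFn.symm).trans (runWeight_map w e.strictMono _)

theorem sum_choose_smul_mul_permRunSum {a w : ℕ → R} (hw : w 0 = 1)
    (haw : ∀ m ≠ 0, ∑ k ∈ range (m + 1), a k * w (m - k) = 0) {n : ℕ} (hn : n ≠ 0) :
    ∑ k ∈ range (n + 1), n.choose k • (a k * permRunSum w (n - k)) = 0 := by
  have count_cuts : ∀ k ∈ range (n + 1), n.choose k • (a k * permRunSum w (n - k)) =
      ∑ l ∈ arrangements (univ : Finset (Fin n)),
        if (l.take k).IsChain (· < ·) then a k * runWeight w (l.drop k) else 0 := by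
    intro k hk
    have hrest : ∀ T ∈ (univ : Finset (Fin n)).powersetCard k,
        ∑ v ∈ arrangements (univ \ T), a k * runWeight w v = a k * permRunSum w (n - k) := by
      intro T hT
      rw [← mul_sum, sum_arrangements_runWeight, card_univ_sdiff, Fintype.card_fin,
        (mem_powersetCard.1 hT).2]
    rw [sum_arrangements_ite_isChain_take univ (by simpa using mem_range_succ_iff.1 hk)
      fun v => a k * runWeight w v, sum_congr rfl hrest, sum_const, card_powersetCard, card_fin]
  rw [sum_congr rfl count_cuts, sum_comm]
  refine sum_eq_zero fun l hl => ?_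
  exact sum_ite_isChain_take_mul_runWeight_drop hw haw
    (by simpa using length_of_mem_arrangements hl) hn

/-- `runComposition σ` bundled as a composition of `n`, so that the permutations can be grouped by
the `L ⊨ n` of the theorem. -/
def permComposition {n : ℕ} (σ : Equiv.Perm (Fin n)) : Composition n where
  blocks := runComposition σ
  blocks_pos hi := by
    obtain ⟨u, hu, rfl⟩ := List.mem_map.1 hi
    exact List.length_pos_iff.2 (List.ne_nil_of_mem_splitBy hu)
  blocks_sum := by
    rw [runComposition, ← List.length_flatten, List.flatten_splitBy, List.length_ofFn]

theorem runCount_eq_card_filter {n : ℕ} (L : Composition n) :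
    runCount L = #{σ | permComposition σ = L} :=
  Nat.subtype_card _ fun σ => by simp [Composition.ext_iff, permComposition]

theorem sum_composition_prod_mul_runCount (w : ℕ → R) (n : ℕ) :
    ∑ L : Composition n, (L.blocks.map w).prod * (runCount L : R) = permRunSum w n := by
  rw [permRunSum, ← sum_fiberwise univ permComposition]
  refine sum_congr rfl fun L _ => ?_
  have weight_eq : ∀ σ ∈ ({σ | permComposition σ = L} : Finset (Equiv.Perm (Fin n))),
      runWeight w (List.ofFn σ) = (L.blocks.map w).prod := by
    intro σ hσ
    rw [← (mem_filter.1 hσ).2]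
    rfl
  rw [sum_congr rfl weight_eq, sum_const, nsmul_eq_mul, runCount_eq_card_filter, Nat.cast_comm]

end Permutations

theorem inv_factorial_smul_mul_inv_factorial_smul {R : Type*} [Semiring R] [Algebra ℚ≥0 R]
    {n k : ℕ} (hk : k ≤ n) (x y : R) :
    ((k.factorial : ℚ≥0)⁻¹ • x) * (((n - k).factorial : ℚ≥0)⁻¹ • y) =
      (n.factorial : ℚ≥0)⁻¹ • n.choose k • (x * y) := by
  have hscalar : (k.factorial : ℚ≥0)⁻¹ * ((n - k).factorial : ℚ≥0)⁻¹ =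
      (n.factorial : ℚ≥0)⁻¹ * n.choose k := by
    have := (Nat.choose_pos hk).ne'
    rw [← Nat.choose_mul_factorial_mul_factorial hk]
    push_cast
    field_simp
  rw [smul_mul_smul_comm, hscalar, mul_smul, Nat.cast_smul_eq_nsmul]

end RunTheorem

open RunTheorem in
theorem stmt10_general {R : Type*} [Semiring R] [Algebra ℚ≥0 R] (a w : ℕ → R) (ha : a 0 = 1)
    (hw : PowerSeries.mk a * PowerSeries.mk w = 1) :
    (PowerSeries.mk fun n => (n.factorial : ℚ≥0)⁻¹ • a n) *
      (PowerSeries.mk fun n => (n.factorial : ℚ≥0)⁻¹ •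
        ∑ L : Composition n, (L.blocks.map w).prod * (runCount L : R)) = 1 := by
  have haw (m : ℕ) : ∑ k ∈ Finset.range (m + 1), a k * w (m - k) = if m = 0 then 1 else 0 := by
    simpa [PowerSeries.coeff_mul, Finset.Nat.sum_antidiagonal_eq_sum_range_succ_mk,
      PowerSeries.coeff_one] using congrArg (PowerSeries.coeff m) hw
  have hw0 : w 0 = 1 := by simpa [ha] using haw 0
  simp_rw [sum_composition_prod_mul_runCount]
  ext n
  rw [PowerSeries.coeff_mul, Finset.Nat.sum_antidiagonal_eq_sum_range_succ_mk,
    PowerSeries.coeff_one]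
  simp only [PowerSeries.coeff_mk]
  rcases eq_or_ne n 0 with rfl | hn
  · simp [ha, permRunSum, runWeight_nil]
  · rw [if_neg hn, Finset.sum_congr rfl fun k hk =>
        inv_factorial_smul_mul_inv_factorial_smul (Finset.mem_range_succ_iff.1 hk) _ _,
      ← Finset.smul_sum, sum_choose_smul_mul_permRunSum hw0 (fun m hm => by simp [haw, hm]) hn,
      smul_zero]

/-- the Run Theorem, power series version. Over a field `F` of
characteristic `0`, let `a₀ = 1` and define `(wₙ)` by `(∑ aₙ xⁿ)⁻¹ = ∑ wₙ xⁿ`. Then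
`(∑ aₙ xⁿ/n!)⁻¹ = ∑ bₙ xⁿ/n!` where `bₙ = ∑_{L ⊨ n} w_L · β(L)`, the sum over all
compositions `L` of `n`, with `w_L = w_{L₁} ⋯ w_{L_k}` and `β(L)` the number of
permutations of `{1, ..., n}` whose run composition is `L`. -/
theorem stmt10 (F : Type*) [Field F] [CharZero F] (a w : ℕ → F) (ha : a 0 = 1)
    (hw : (PowerSeries.mk a)⁻¹ = PowerSeries.mk w) :
    (PowerSeries.mk fun n => a n / n.factorial)⁻¹
      = PowerSeries.mk fun n =>
          (∑ L : Composition n, (L.blocks.map w).prod * (runCount L : F)) / n.factorial := by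
  have hmul := stmt10_general a w ha (by rw [← hw, PowerSeries.mul_inv_cancel _ (by simp [ha])])
  rw [PowerSeries.inv_eq_iff_mul_eq_one (by simp [ha]), mul_comm]
  simpa only [NNRat.smul_def, NNRat.cast_inv, NNRat.cast_natCast, ← div_eq_inv_mul] using hmul
end
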